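/- Let n ≥ 1, let u : ℝⁿ → ℝ be a Schwartz function, and let s, t ∈ (0,1) with s + t < 1. Define w(x) := c_{n,t} · lim_{ε→0⁺} ∫_{{y : |y−x| > ε}} (u(x) − u(y))/|x−y|^{n+2t} dy (this principal value limit exists at every x). Then for every x ∈ ℝⁿ the principal value limit c_{n,s} · lim_{ε→0⁺} ∫_{{y : |y−x| > ε}} (w(x) − w(y))/|x−y|^{n+2s} dy exists and equals c_{n,s+t} · lim_{ε→0⁺} ∫_{{y : |y−x| > ε}} (u(x) − u(y))/|x−y|^{n+2(s+t)} dy; that is, the fractional Laplacian enjoys the semigroup property (−Δ)^s (−Δ)^t u = (−Δ)^{s+t} u on Schwartz functions. -/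

import Mathlib

open MeasureTheory Filter Metric Set
open scoped Topology

/-- The normalization constant `c_{n,r} = (∫_{ℝⁿ} (1 − cos ζ₁)/|ζ|^{n+2r} dζ)⁻¹`. -/
noncomputable def fracC (n : ℕ) (hn : 1 ≤ n) (r : ℝ) : ℝ :=
  (∫ ζ : EuclideanSpace ℝ (Fin n),
    (1 - Real.cos (ζ ⟨0, hn⟩)) / ‖ζ‖ ^ ((n : ℝ) + 2 * r))⁻¹
open scoped RealInnerProductSpace FourierTransform


lemma fl_int_min (n : ℕ) (hn : 1 ≤ n) (r : ℝ) (hr : r ∈ Set.Ioo (0:ℝ) 1) :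
    Integrable (fun z : EuclideanSpace ℝ (Fin n) => min 1 (‖z‖ ^ 2) * (‖z‖ ^ ((n : ℝ) + 2 * r))⁻¹) := by
  obtain ⟨h0, h1⟩ := hr
  haveI : Nonempty (Fin n) := ⟨⟨0, hn⟩⟩
  haveI : Nontrivial (EuclideanSpace ℝ (Fin n)) := inferInstance
  rw [integrable_fun_norm_addHaar volume
    (f := fun y : ℝ => min 1 (y ^ 2) * (y ^ ((n : ℝ) + 2 * r))⁻¹)]
  have hpw : ∀ y : ℝ, 0 < y → y ^ (n - 1) * (y ^ ((n : ℝ) + 2 * r))⁻¹ = y ^ (-1 - 2 * r) := by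
    intro y hy
    rw [← Real.rpow_neg hy.le, ← Real.rpow_natCast, ← Real.rpow_add hy]
    congr 1
    push_cast [hn]
    ring
  have hU : Ioi (0:ℝ) = Ioc 0 1 ∪ Ioi 1 := by
    rw [Ioc_union_Ioi_eq_Ioi zero_le_one]
  rw [hU]
  refine IntegrableOn.union ?_ ?_
  · have := (intervalIntegral.intervalIntegrable_rpow' (a := 0) (b := 1)
      (r := 1 - 2 * r) (by linarith))
    rw [intervalIntegrable_iff_integrableOn_Ioc_of_le zero_le_one] at this
    refine this.congr_fun ?_ measurableSet_Ioc
    intro y hy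
    have hy0 : 0 < y := hy.1
    have : min 1 (y ^ 2) = y ^ 2 := min_eq_right (by nlinarith [hy.1, hy.2])
    simp only [smul_eq_mul, finrank_euclideanSpace, Fintype.card_fin, this]
    rw [mul_left_comm, hpw y hy0, ← Real.rpow_natCast, ← Real.rpow_add hy0]
    congr 1
    push_cast
    ring
  · have := integrableOn_Ioi_rpow_of_lt (a := -1 - 2 * r) (by linarith) (zero_lt_one)
    refine this.congr_fun ?_ measurableSet_Ioi
    intro y hy
    have hy1 : 1 < y := hy
    have hy0 : 0 < y := by linarith
    have : min 1 (y ^ 2) = 1 := min_eq_left (by nlinarith)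
    simp only [smul_eq_mul, finrank_euclideanSpace, Fintype.card_fin, this]
    rw [one_mul, hpw y hy0]

lemma fl_cos_bound {n : ℕ} (v z : EuclideanSpace ℝ (Fin n)) :
    1 - Real.cos ⟪v, z⟫ ≤ (2 + ‖v‖ ^ 2) * min 1 (‖z‖ ^ 2) := by
  have h1 := Real.one_sub_sq_div_two_le_cos (x := ⟪v, z⟫)
  have h2 := Real.neg_one_le_cos ⟪v, z⟫
  have h3 : ⟪v, z⟫ ^ 2 ≤ ‖v‖ ^ 2 * ‖z‖ ^ 2 := by
    rw [← mul_pow]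
    exact sq_le_sq' (by linarith [neg_abs_le ⟪v, z⟫, abs_real_inner_le_norm v z])
      (real_inner_le_norm v z)
  rcases min_cases 1 (‖z‖ ^ 2) with ⟨h, _⟩ | ⟨h, _⟩ <;> rw [h] <;>
    nlinarith [sq_nonneg ‖v‖, sq_nonneg ‖z‖, mul_nonneg (sq_nonneg ‖v‖) (sq_nonneg ‖z‖)]

lemma fl_int_cos (n : ℕ) (hn : 1 ≤ n) (r : ℝ) (hr : r ∈ Set.Ioo (0:ℝ) 1) (v : EuclideanSpace ℝ (Fin n)) :
    Integrable (fun z : EuclideanSpace ℝ (Fin n) => (1 - Real.cos ⟪v, z⟫) * (‖z‖ ^ ((n : ℝ) + 2 * r))⁻¹) := by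
  refine ((fl_int_min n hn r hr).const_mul (2 + ‖v‖ ^ 2)).mono' ?_ (Eventually.of_forall ?_)
  · refine Measurable.aestronglyMeasurable ?_
    fun_prop
  · intro z
    have h0 : 0 ≤ 1 - Real.cos ⟪v, z⟫ := by linarith [Real.cos_le_one ⟪v, z⟫]
    have h1 : 0 ≤ (‖z‖ ^ ((n : ℝ) + 2 * r))⁻¹ := by positivity
    rw [Real.norm_of_nonneg (mul_nonneg h0 h1), ← mul_assoc]
    exact mul_le_mul_of_nonneg_right (fl_cos_bound v z) h1

/-- The truncated kernel. -/
noncomputable def flK (n : ℕ) (r ε : ℝ) (z : EuclideanSpace ℝ (Fin n)) : ℝ :=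
  Set.indicator {z : EuclideanSpace ℝ (Fin n) | ε < ‖z‖} (fun z => (‖z‖ ^ ((n : ℝ) + 2 * r))⁻¹) z

lemma flK_meas (n : ℕ) (r ε : ℝ) : Measurable (flK n r ε) := by
  unfold flK
  refine Measurable.indicator (by fun_prop) ?_
  exact measurableSet_lt measurable_const measurable_norm

lemma flK_nonneg (n : ℕ) (r ε : ℝ) (z : EuclideanSpace ℝ (Fin n)) : 0 ≤ flK n r ε z := by
  unfold flK
  exact Set.indicator_nonneg (fun z _ => by positivity) z

lemma flK_le (n : ℕ) (r ε : ℝ) (z : EuclideanSpace ℝ (Fin n)) : flK n r ε z ≤ (‖z‖ ^ ((n : ℝ) + 2 * r))⁻¹ := by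
  unfold flK
  exact Set.indicator_le_self' (fun z _ => by positivity) z

lemma flK_neg (n : ℕ) (r ε : ℝ) (z : EuclideanSpace ℝ (Fin n)) : flK n r ε (-z) = flK n r ε z := by
  unfold flK
  simp [Set.indicator]

lemma flK_int (n : ℕ) (hn : 1 ≤ n) (r : ℝ) (hr : r ∈ Set.Ioo (0:ℝ) 1) (ε : ℝ) (hε : 0 < ε) :
    Integrable (flK n r ε) := by
  have hm : 0 < min 1 (ε ^ 2) := by positivity
  refine ((fl_int_min n hn r hr).const_mul (min 1 (ε ^ 2))⁻¹).mono'
    (flK_meas n r ε).aestronglyMeasurable (Eventually.of_forall ?_)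
  intro z
  rw [Real.norm_of_nonneg (flK_nonneg n r ε z)]
  by_cases hz : ε < ‖z‖
  · have : flK n r ε z = (‖z‖ ^ ((n : ℝ) + 2 * r))⁻¹ := by simp [flK, hz]
    rw [this, ← mul_assoc]
    refine le_mul_of_one_le_left (by positivity) ?_
    rw [inv_mul_eq_div, one_le_div hm]
    gcongr
  · have : flK n r ε z = 0 := by simp [flK, hz]
    rw [this]
    positivity

/-- The constant `A_r`. -/
noncomputable def flA (n : ℕ) (hn : 1 ≤ n) (r : ℝ) : ℝ :=
  ∫ ζ : EuclideanSpace ℝ (Fin n), (1 - Real.cos (ζ ⟨0, hn⟩)) / ‖ζ‖ ^ ((n : ℝ) + 2 * r)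

lemma flA_eq (n : ℕ) (hn : 1 ≤ n) (r : ℝ) : flA n hn r =
    ∫ z : EuclideanSpace ℝ (Fin n), (1 - Real.cos ⟪(EuclideanSpace.single ⟨0, hn⟩ (1:ℝ) : EuclideanSpace ℝ (Fin n)), z⟫)
      * (‖z‖ ^ ((n : ℝ) + 2 * r))⁻¹ := by
  unfold flA
  congr 1
  ext z
  rw [EuclideanSpace.inner_single_left]
  simp [div_eq_mul_inv]

lemma flA_pos (n : ℕ) (hn : 1 ≤ n) (r : ℝ) (hr : r ∈ Set.Ioo (0:ℝ) 1) : 0 < flA n hn r := by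
  rw [flA_eq]
  set e : EuclideanSpace ℝ (Fin n) := EuclideanSpace.single ⟨0, hn⟩ (1:ℝ) with he
  have hnn : ∀ z : EuclideanSpace ℝ (Fin n), 0 ≤ (1 - Real.cos ⟪e, z⟫) * (‖z‖ ^ ((n : ℝ) + 2 * r))⁻¹ := by
    intro z
    have h0 : 0 ≤ 1 - Real.cos ⟪e, z⟫ := by linarith [Real.cos_le_one ⟪e, z⟫]
    positivity
  rw [integral_pos_iff_support_of_nonneg hnn (fl_int_cos n hn r hr e)]
  have hopen : IsOpen {z : EuclideanSpace ℝ (Fin n) | Real.cos ⟪e, z⟫ < 1} :=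
    isOpen_lt (by fun_prop) continuous_const
  have hne : {z : EuclideanSpace ℝ (Fin n) | Real.cos ⟪e, z⟫ < 1}.Nonempty := by
    refine ⟨Real.pi • e, ?_⟩
    have : ⟪e, Real.pi • e⟫ = Real.pi := by
      rw [inner_smul_right, real_inner_self_eq_norm_sq]
      simp [he]
    simp only [Set.mem_setOf_eq, this, Real.cos_pi]
    norm_num
  refine (hopen.measure_pos volume hne).trans_le (measure_mono ?_)
  intro z hz
  have hz' : Real.cos ⟪e, z⟫ < 1 := hz
  have hz0 : z ≠ 0 := by
    rintro rfl
    simp at hz'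
  have : 0 < ‖z‖ := norm_pos_iff.2 hz0
  have h2 : 0 < 1 - Real.cos ⟪e, z⟫ := by linarith
  exact (mul_pos h2 (by positivity)).ne'

lemma fl_symbol (n : ℕ) (hn : 1 ≤ n) (r : ℝ) (hr : r ∈ Set.Ioo (0:ℝ) 1) (v : EuclideanSpace ℝ (Fin n)) :
    ∫ z : EuclideanSpace ℝ (Fin n), (1 - Real.cos ⟪v, z⟫) * (‖z‖ ^ ((n : ℝ) + 2 * r))⁻¹
      = ‖v‖ ^ (2 * r) * flA n hn r := by
  rcases eq_or_ne v 0 with rfl | hv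
  · have : 2 * r ≠ 0 := by have := hr.1; positivity
    simp [Real.zero_rpow this]
  have hv0 : 0 < ‖v‖ := norm_pos_iff.2 hv
  rw [flA_eq]
  set e : EuclideanSpace ℝ (Fin n) := EuclideanSpace.single ⟨0, hn⟩ (1:ℝ) with he
  have hnorm : ‖‖v‖ • e‖ = ‖v‖ := by simp [he, norm_smul]
  set R : EuclideanSpace ℝ (Fin n) ≃ₗᵢ[ℝ] EuclideanSpace ℝ (Fin n) := (ℝ ∙ (‖v‖ • e - v))ᗮ.reflection with hR
  have hRe : R (‖v‖ • e) = v := Submodule.reflection_sub hnorm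
  have h1 : ∫ z : EuclideanSpace ℝ (Fin n), (1 - Real.cos ⟪v, z⟫) * (‖z‖ ^ ((n : ℝ) + 2 * r))⁻¹
      = ∫ z : EuclideanSpace ℝ (Fin n), (1 - Real.cos ⟪v, R z⟫) * (‖R z‖ ^ ((n : ℝ) + 2 * r))⁻¹ :=
    ((R.measurePreserving).integral_comp R.toHomeomorph.measurableEmbedding
      (fun z : EuclideanSpace ℝ (Fin n) => (1 - Real.cos ⟪v, z⟫) * (‖z‖ ^ ((n : ℝ) + 2 * r))⁻¹)).symm
  have h2 : ∀ z : EuclideanSpace ℝ (Fin n), (1 - Real.cos ⟪v, R z⟫) * (‖R z‖ ^ ((n : ℝ) + 2 * r))⁻¹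
      = ‖v‖ ^ ((n : ℝ) + 2 * r) *
        ((1 - Real.cos ⟪e, ‖v‖ • z⟫) * (‖‖v‖ • z‖ ^ ((n : ℝ) + 2 * r))⁻¹) := by
    intro z
    have : ⟪v, R z⟫ = ⟪e, ‖v‖ • z⟫ := by
      conv_lhs => rw [← hRe]
      rw [R.inner_map_map, inner_smul_left, inner_smul_right]
      simp
    rw [this, R.norm_map, norm_smul, norm_norm, Real.mul_rpow hv0.le (norm_nonneg _), mul_inv]
    have : ‖v‖ ^ ((n : ℝ) + 2 * r) ≠ 0 := by positivity
    field_simp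
  rw [h1]
  simp_rw [h2]
  rw [integral_const_mul, Measure.integral_comp_smul_of_nonneg volume
    (fun z : EuclideanSpace ℝ (Fin n) => (1 - Real.cos ⟪e, z⟫) * (‖z‖ ^ ((n : ℝ) + 2 * r))⁻¹) ‖v‖ (hR := hv0.le)]
  rw [smul_eq_mul, ← mul_assoc, finrank_euclideanSpace, Fintype.card_fin,
    Real.rpow_add hv0, Real.rpow_natCast]
  congr 1
  field_simp

/-- The truncated symbol. -/
noncomputable def flM (n : ℕ) (r ε : ℝ) (v : EuclideanSpace ℝ (Fin n)) : ℝ :=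
  ∫ z : EuclideanSpace ℝ (Fin n), (1 - Real.cos ⟪v, z⟫) * flK n r ε z

lemma flM_nonneg (n : ℕ) (r ε : ℝ) (v : EuclideanSpace ℝ (Fin n)) : 0 ≤ flM n r ε v := by
  refine integral_nonneg fun z => mul_nonneg ?_ (flK_nonneg n r ε z)
  simp only [sub_nonneg]
  exact Real.cos_le_one _

lemma fl_trunc_le (n : ℕ) (r ε : ℝ) (v z : EuclideanSpace ℝ (Fin n)) :
    ‖(1 - Real.cos ⟪v, z⟫) * flK n r ε z‖
      ≤ (1 - Real.cos ⟪v, z⟫) * (‖z‖ ^ ((n : ℝ) + 2 * r))⁻¹ := by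
  have h0 : 0 ≤ 1 - Real.cos ⟪v, z⟫ := by linarith [Real.cos_le_one ⟪v, z⟫]
  rw [Real.norm_of_nonneg (mul_nonneg h0 (flK_nonneg n r ε z))]
  exact mul_le_mul_of_nonneg_left (flK_le n r ε z) h0

lemma fl_trunc_meas (n : ℕ) (r ε : ℝ) (v : EuclideanSpace ℝ (Fin n)) :
    AEStronglyMeasurable (fun z : EuclideanSpace ℝ (Fin n) => (1 - Real.cos ⟪v, z⟫) * flK n r ε z) := by
  refine Measurable.aestronglyMeasurable ?_
  have := flK_meas n r ε
  fun_prop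

lemma flM_le (n : ℕ) (hn : 1 ≤ n) (r : ℝ) (hr : r ∈ Set.Ioo (0:ℝ) 1) (ε : ℝ) (v : EuclideanSpace ℝ (Fin n)) :
    flM n r ε v ≤ ‖v‖ ^ (2 * r) * flA n hn r := by
  rw [← fl_symbol n hn r hr v]
  refine integral_mono ?_ (fl_int_cos n hn r hr v)
    (fun z => (le_abs_self _).trans (fl_trunc_le n r ε v z))
  exact (fl_int_cos n hn r hr v).mono' (fl_trunc_meas n r ε v)
    (Eventually.of_forall (fl_trunc_le n r ε v))

lemma flM_tendsto (n : ℕ) (hn : 1 ≤ n) (r : ℝ) (hr : r ∈ Set.Ioo (0:ℝ) 1) (v : EuclideanSpace ℝ (Fin n)) :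
    Tendsto (fun ε => flM n r ε v) (𝓝[>] (0:ℝ)) (𝓝 (‖v‖ ^ (2 * r) * flA n hn r)) := by
  rw [← fl_symbol n hn r hr v]
  refine tendsto_integral_filter_of_dominated_convergence _
    (Eventually.of_forall fun ε => fl_trunc_meas n r ε v)
    (Eventually.of_forall fun ε => Eventually.of_forall (fl_trunc_le n r ε v))
    (fl_int_cos n hn r hr v) (Eventually.of_forall fun z => ?_)
  rcases eq_or_ne z 0 with rfl | hz
  · simp
  refine tendsto_const_nhds.congr' ?_
  have : ∀ᶠ ε in 𝓝[>] (0:ℝ), ε < ‖z‖ :=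
    mem_nhdsWithin_of_mem_nhds (Iio_mem_nhds (norm_pos_iff.2 hz))
  filter_upwards [this] with ε hε
  simp [flK, hε]

lemma flM_complex (n : ℕ) (hn : 1 ≤ n) (r : ℝ) (hr : r ∈ Set.Ioo (0:ℝ) 1) (ε : ℝ) (hε : 0 < ε)
    (v : EuclideanSpace ℝ (Fin n)) :
    ∫ z : EuclideanSpace ℝ (Fin n), (1 - Complex.exp ((⟪v, z⟫ : ℝ) * Complex.I)) * (flK n r ε z : ℂ)
      = (flM n r ε v : ℂ) := by
  have hK := (flK_int n hn r hr ε hε).ofReal (𝕜 := ℂ)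
  have hI : Integrable (fun z : EuclideanSpace ℝ (Fin n) =>
      (1 - Complex.exp ((⟪v, z⟫ : ℝ) * Complex.I)) * (flK n r ε z : ℂ)) := by
    refine hK.bdd_mul (c := 2) ?_ (Eventually.of_forall fun z => ?_)
    · exact Continuous.aestronglyMeasurable (by fun_prop)
    · refine (norm_sub_le _ _).trans ?_
      rw [Complex.norm_exp_ofReal_mul_I]
      norm_num
  have h1 := integral_neg_eq_self (fun z : EuclideanSpace ℝ (Fin n) =>
      (1 - Complex.exp ((⟪v, z⟫ : ℝ) * Complex.I)) * (flK n r ε z : ℂ)) volume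
  have hI' := hI.comp_neg
  have h2 := integral_add hI hI'
  rw [h1] at h2
  have h3 : ∀ z : EuclideanSpace ℝ (Fin n), (1 - Complex.exp ((⟪v, z⟫ : ℝ) * Complex.I)) * (flK n r ε z : ℂ) +
      (1 - Complex.exp ((⟪v, -z⟫ : ℝ) * Complex.I)) * (flK n r ε (-z) : ℂ)
      = 2 * (((1 - Real.cos ⟪v, z⟫) * flK n r ε z : ℝ) : ℂ) := by
    intro z
    rw [flK_neg, inner_neg_right]
    push_cast
    rw [Complex.cos]
    ring_nf
  simp_rw [h3] at h2
  rw [integral_const_mul, integral_complex_ofReal] at h2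
  unfold flM
  linear_combination (-1/2) * h2

lemma fl_fubini (n : ℕ) (hn : 1 ≤ n) (r : ℝ) (hr : r ∈ Set.Ioo (0:ℝ) 1) (ε : ℝ) (hε : 0 < ε)
    (f : EuclideanSpace ℝ (Fin n) → ℝ) (g : EuclideanSpace ℝ (Fin n) → ℂ) (hg : Integrable g)
    (hf : ∀ y, (f y : ℂ) = ∫ ξ : EuclideanSpace ℝ (Fin n), Complex.exp ((⟪(2 * Real.pi) • ξ, y⟫ : ℝ) * Complex.I) * g ξ)
    (x : EuclideanSpace ℝ (Fin n)) :
    ((∫ z : EuclideanSpace ℝ (Fin n), (f x - f (x + z)) * flK n r ε z : ℝ) : ℂ) =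
      ∫ ξ : EuclideanSpace ℝ (Fin n), Complex.exp ((⟪(2 * Real.pi) • ξ, x⟫ : ℝ) * Complex.I) * g ξ
        * (flM n r ε ((2 * Real.pi) • ξ) : ℂ) := by
  have hK := (flK_int n hn r hr ε hε).ofReal (𝕜 := ℂ)
  have hint : ∀ y : EuclideanSpace ℝ (Fin n), Integrable (fun ξ : EuclideanSpace ℝ (Fin n) =>
      Complex.exp ((⟪(2 * Real.pi) • ξ, y⟫ : ℝ) * Complex.I) * g ξ) := by
    intro y
    refine hg.bdd_mul (c := 1) (Continuous.aestronglyMeasurable (by fun_prop))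
      (Eventually.of_forall fun ξ => ?_)
    rw [Complex.norm_exp_ofReal_mul_I]
  let F : EuclideanSpace ℝ (Fin n) → EuclideanSpace ℝ (Fin n) → ℂ := fun z ξ =>
    Complex.exp ((⟪(2 * Real.pi) • ξ, x⟫ : ℝ) * Complex.I)
        * (1 - Complex.exp ((⟪(2 * Real.pi) • ξ, z⟫ : ℝ) * Complex.I))
      * ((flK n r ε z : ℂ) * g ξ)
  have hF1 : ∀ z, (((f x - f (x + z)) * flK n r ε z : ℝ) : ℂ) = ∫ ξ, F z ξ := by
    intro z
    push_cast
    rw [hf x, hf (x + z), ← integral_sub (hint x) (hint (x + z)), ← integral_mul_const]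
    congr 1
    ext ξ
    simp only [F]
    rw [inner_add_right]
    push_cast
    rw [add_mul, Complex.exp_add]
    ring
  have hF2 : ∀ ξ, ∫ z, F z ξ = Complex.exp ((⟪(2 * Real.pi) • ξ, x⟫ : ℝ) * Complex.I) * g ξ
        * (flM n r ε ((2 * Real.pi) • ξ) : ℂ) := by
    intro ξ
    rw [← flM_complex n hn r hr ε hε, ← integral_const_mul]
    congr 1
    ext z
    simp only [F]
    ring
  have hFi : Integrable (Function.uncurry F) (volume.prod volume) := by
    have := hK.mul_prod hg
    refine this.bdd_mul (c := 2)
      (f := fun p : EuclideanSpace ℝ (Fin n) × EuclideanSpace ℝ (Fin n) => Complex.exp ((⟪(2 * Real.pi) • p.2, x⟫ : ℝ) * Complex.I)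
        * (1 - Complex.exp ((⟪(2 * Real.pi) • p.2, p.1⟫ : ℝ) * Complex.I)))
      (Continuous.aestronglyMeasurable (by fun_prop)) (Eventually.of_forall fun p => ?_)
    rw [norm_mul, Complex.norm_exp_ofReal_mul_I, one_mul]
    refine (norm_sub_le _ _).trans ?_
    rw [Complex.norm_exp_ofReal_mul_I]
    norm_num
  rw [← integral_complex_ofReal]
  simp_rw [hF1]
  rw [integral_integral_swap hFi]
  simp_rw [hF2]

lemma fl_shift (n : ℕ) (r ε : ℝ) (f : EuclideanSpace ℝ (Fin n) → ℝ) (x : EuclideanSpace ℝ (Fin n)) :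
    ∫ y in {y : EuclideanSpace ℝ (Fin n) | ε < ‖y - x‖}, (f x - f y) / ‖x - y‖ ^ ((n : ℝ) + 2 * r)
      = ∫ z : EuclideanSpace ℝ (Fin n), (f x - f (x + z)) * flK n r ε z := by
  have hm : MeasurableSet {y : EuclideanSpace ℝ (Fin n) | ε < ‖y - x‖} :=
    measurableSet_lt measurable_const (by fun_prop)
  rw [← integral_indicator hm, ← integral_add_left_eq_self _ x]
  congr 1
  ext z
  by_cases hz : ε < ‖z‖ <;> simp [flK, hz, Set.indicator, div_eq_mul_inv]

lemma fl_key (n : ℕ) (hn : 1 ≤ n) (r : ℝ) (hr : r ∈ Set.Ioo (0:ℝ) 1)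
    (f : EuclideanSpace ℝ (Fin n) → ℝ) (g : EuclideanSpace ℝ (Fin n) → ℂ) (hg : Integrable g)
    (hg' : Integrable (fun ξ : EuclideanSpace ℝ (Fin n) => ((‖(2 * Real.pi) • ξ‖ ^ (2 * r) : ℝ) : ℂ) * g ξ))
    (hf : ∀ y, (f y : ℂ) = ∫ ξ : EuclideanSpace ℝ (Fin n), Complex.exp ((⟪(2 * Real.pi) • ξ, y⟫ : ℝ) * Complex.I) * g ξ)
    (x : EuclideanSpace ℝ (Fin n)) :
    ∃ L : ℝ, Tendsto (fun ε : ℝ => ∫ y in {y : EuclideanSpace ℝ (Fin n) | ε < ‖y - x‖},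
          (f x - f y) / ‖x - y‖ ^ ((n : ℝ) + 2 * r)) (𝓝[>] (0:ℝ)) (𝓝 L) ∧
      ((fracC n hn r * L : ℝ) : ℂ) = ∫ ξ : EuclideanSpace ℝ (Fin n),
        Complex.exp ((⟪(2 * Real.pi) • ξ, x⟫ : ℝ) * Complex.I)
          * (((‖(2 * Real.pi) • ξ‖ ^ (2 * r) : ℝ) : ℂ) * g ξ) := by
  set G : ℝ → ℝ := fun ε : ℝ => ∫ y in {y : EuclideanSpace ℝ (Fin n) | ε < ‖y - x‖},
          (f x - f y) / ‖x - y‖ ^ ((n : ℝ) + 2 * r) with hG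
  set Z : ℂ := ∫ ξ : EuclideanSpace ℝ (Fin n), Complex.exp ((⟪(2 * Real.pi) • ξ, x⟫ : ℝ) * Complex.I) * g ξ
        * ((‖(2 * Real.pi) • ξ‖ ^ (2 * r) * flA n hn r : ℝ) : ℂ) with hZ
  have hT : Tendsto (fun ε => ((G ε : ℝ) : ℂ)) (𝓝[>] (0:ℝ)) (𝓝 Z) := by
    have hev : (fun ε => ∫ ξ : EuclideanSpace ℝ (Fin n), Complex.exp ((⟪(2 * Real.pi) • ξ, x⟫ : ℝ) * Complex.I) * g ξ
        * (flM n r ε ((2 * Real.pi) • ξ) : ℂ)) =ᶠ[𝓝[>] (0:ℝ)] (fun ε => ((G ε : ℝ) : ℂ)) := by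
      filter_upwards [self_mem_nhdsWithin] with ε hε
      rw [hG]
      simp only
      rw [fl_shift, fl_fubini n hn r hr ε hε f g hg hf x]
    refine Tendsto.congr' hev ?_
    refine tendsto_integral_filter_of_dominated_convergence
      (fun ξ => flA n hn r * ‖((‖(2 * Real.pi) • ξ‖ ^ (2 * r) : ℝ) : ℂ) * g ξ‖) ?_ ?_
      (hg'.norm.const_mul _) ?_
    · filter_upwards with ε
      refine AEStronglyMeasurable.mul (AEStronglyMeasurable.mul
        (Continuous.aestronglyMeasurable (by fun_prop)) hg.1) ?_
      have h1 : StronglyMeasurable (fun ξ : EuclideanSpace ℝ (Fin n) => flM n r ε ((2 * Real.pi) • ξ)) := by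
        unfold flM
        have h2 : StronglyMeasurable (Function.uncurry fun (ξ z : EuclideanSpace ℝ (Fin n)) =>
            (1 - Real.cos ⟪(2 * Real.pi) • ξ, z⟫) * flK n r ε z) := by
          have := flK_meas n r ε
          refine Measurable.stronglyMeasurable ?_
          unfold Function.uncurry
          fun_prop
        exact h2.integral_prod_right
      exact (Complex.measurable_ofReal.comp h1.measurable).aestronglyMeasurable
    · filter_upwards with ε
      filter_upwards with ξ
      rw [norm_mul, norm_mul, norm_mul, Complex.norm_exp_ofReal_mul_I, one_mul, Complex.norm_real,
        Complex.norm_real, Real.norm_of_nonneg (flM_nonneg _ _ _ _),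
        Real.norm_of_nonneg (by positivity)]
      have := mul_le_mul_of_nonneg_left (flM_le n hn r hr ε ((2 * Real.pi) • ξ)) (norm_nonneg (g ξ))
      linarith
    · filter_upwards with ξ
      refine Tendsto.const_mul _ ?_
      exact (Complex.continuous_ofReal.tendsto _).comp (flM_tendsto n hn r hr _)
  have hre : Tendsto G (𝓝[>] (0:ℝ)) (𝓝 Z.re) := (Complex.continuous_re.tendsto _).comp hT
  have hZre : ((Z.re : ℝ) : ℂ) = Z :=
    tendsto_nhds_unique ((Complex.continuous_ofReal.tendsto _).comp hre) hT
  refine ⟨Z.re, hre, ?_⟩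
  have hA := (flA_pos n hn r hr).ne'
  have hc : fracC n hn r = (flA n hn r)⁻¹ := rfl
  push_cast
  rw [hZre, hZ, hc, ← integral_const_mul]
  congr 1
  ext ξ
  have hA' : (flA n hn r : ℂ) ≠ 0 := by exact_mod_cast hA
  push_cast
  field_simp

lemma fl_schwartz_int (n : ℕ) (r : ℝ) (hr : r ∈ Set.Ioo (0:ℝ) 1) (g : SchwartzMap (EuclideanSpace ℝ (Fin n)) ℂ) :
    Integrable (fun ξ : EuclideanSpace ℝ (Fin n) => ((‖(2 * Real.pi) • ξ‖ ^ (2 * r) : ℝ) : ℂ) * g ξ) := by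
  have h0 := g.integrable_pow_mul volume 0
  have h2 := (g.integrable_pow_mul volume 2).const_mul ((2 * Real.pi) ^ 2)
  refine (h0.add h2).mono' ?_ (Eventually.of_forall fun ξ => ?_)
  · refine Measurable.aestronglyMeasurable ?_
    have := g.continuous.measurable
    fun_prop
  · rw [norm_mul, Complex.norm_real, Real.norm_of_nonneg (by positivity)]
    simp only [Pi.add_apply, pow_zero, one_mul]
    have hb : ‖(2 * Real.pi) • ξ‖ ^ (2 * r) ≤ 1 + ‖(2 * Real.pi) • ξ‖ ^ 2 := by
      set a := ‖(2 * Real.pi) • ξ‖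
      have ha : 0 ≤ a := norm_nonneg _
      rcases le_total a 1 with h | h
      · have := Real.rpow_le_one ha h (z := 2 * r) (by linarith [hr.1])
        nlinarith
      · have := Real.rpow_le_rpow_of_exponent_le h (y := 2 * r) (z := 2) (by linarith [hr.2])
        rw [Real.rpow_two] at this
        linarith
    have hn2 : ‖(2 * Real.pi) • ξ‖ ^ 2 = (2 * Real.pi) ^ 2 * ‖ξ‖ ^ 2 := by
      rw [norm_smul, mul_pow, Real.norm_of_nonneg (by positivity)]
    rw [hn2] at hb
    nlinarith [mul_le_mul_of_nonneg_right hb (norm_nonneg (g ξ))]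


/-- Semigroup property of the fractional Laplacian on Schwartz
functions: if `w = (−Δ)^t u` (defined pointwise as a principal value), then the
principal value defining `(−Δ)^s w (x)` exists and equals `(−Δ)^{s+t} u (x)`. -/
theorem fractionalLaplacian_semigroup
    (n : ℕ) (hn : 1 ≤ n) (s t : ℝ)
    (hs : s ∈ Set.Ioo (0:ℝ) 1) (ht : t ∈ Set.Ioo (0:ℝ) 1) (hst : s + t < 1)
    (u : SchwartzMap (EuclideanSpace ℝ (Fin n)) ℝ)
    (w : EuclideanSpace ℝ (Fin n) → ℝ)
    (hw : ∀ x : EuclideanSpace ℝ (Fin n),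
      Filter.Tendsto
        (fun ε : ℝ => fracC n hn t *
          ∫ y in {y : EuclideanSpace ℝ (Fin n) | ε < ‖y - x‖},
            (u x - u y) / ‖x - y‖ ^ ((n : ℝ) + 2 * t))
        (𝓝[>] (0:ℝ)) (𝓝 (w x)))
    (x : EuclideanSpace ℝ (Fin n)) :
    ∃ L : ℝ,
      Filter.Tendsto
        (fun ε : ℝ => ∫ y in {y : EuclideanSpace ℝ (Fin n) | ε < ‖y - x‖},
          (u x - u y) / ‖x - y‖ ^ ((n : ℝ) + 2 * (s + t)))
        (𝓝[>] (0:ℝ)) (𝓝 L) ∧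
      Filter.Tendsto
        (fun ε : ℝ => fracC n hn s *
          ∫ y in {y : EuclideanSpace ℝ (Fin n) | ε < ‖y - x‖},
            (w x - w y) / ‖x - y‖ ^ ((n : ℝ) + 2 * s))
        (𝓝[>] (0:ℝ)) (𝓝 (fracC n hn (s + t) * L)) := by
  set uC : SchwartzMap (EuclideanSpace ℝ (Fin n)) ℂ :=
    u.postcompCLM (𝕜 := ℝ) Complex.ofRealCLM with huC
  set g : SchwartzMap (EuclideanSpace ℝ (Fin n)) ℂ := 𝓕 uC with hg
  have hstm : s + t ∈ Set.Ioo (0:ℝ) 1 := ⟨add_pos hs.1 ht.1, hst⟩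
  have hu : ∀ y, (u y : ℂ) = ∫ ξ : EuclideanSpace ℝ (Fin n),
      Complex.exp ((⟪(2 * Real.pi) • ξ, y⟫ : ℝ) * Complex.I) * g ξ := by
    intro y
    have h1 : 𝓕⁻ g = uC := FourierTransform.fourierInv_fourier_eq uC
    have h2 : (𝓕⁻ g) y = (u y : ℂ) := by rw [h1]; rfl
    rw [← h2, SchwartzMap.fourierInv_coe, Real.fourierInv_eq']
    simp only [real_inner_smul_left, smul_eq_mul]
  have hgt := fl_schwartz_int n t ht g
  have hgst := fl_schwartz_int n (s + t) hstm g
  have hwF : ∀ y, (w y : ℂ) = ∫ ξ : EuclideanSpace ℝ (Fin n),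
      Complex.exp ((⟪(2 * Real.pi) • ξ, y⟫ : ℝ) * Complex.I)
        * (((‖(2 * Real.pi) • ξ‖ ^ (2 * t) : ℝ) : ℂ) * g ξ) := by
    intro y
    obtain ⟨L, hL, hL'⟩ := fl_key n hn t ht u g g.integrable hgt hu y
    rw [← hL', tendsto_nhds_unique (hw y) (hL.const_mul _)]
  have hpow : ∀ ξ : EuclideanSpace ℝ (Fin n),
      ((‖(2 * Real.pi) • ξ‖ ^ (2 * s) : ℝ) : ℂ) *
        (((‖(2 * Real.pi) • ξ‖ ^ (2 * t) : ℝ) : ℂ) * g ξ)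
      = ((‖(2 * Real.pi) • ξ‖ ^ (2 * (s + t)) : ℝ) : ℂ) * g ξ := by
    intro ξ
    rw [← mul_assoc, ← Complex.ofReal_mul, mul_add,
      Real.rpow_add_of_nonneg (norm_nonneg _) (by linarith [hs.1]) (by linarith [ht.1])]
  obtain ⟨L, hL, hL'⟩ := fl_key n hn (s + t) hstm u g g.integrable hgst hu x
  obtain ⟨L₂, hL₂, hL₂'⟩ := fl_key n hn s hs w _ hgt (by simpa only [hpow] using hgst) hwF x
  refine ⟨L, hL, ?_⟩
  have : fracC n hn (s + t) * L = fracC n hn s * L₂ := by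
    apply Complex.ofReal_injective
    rw [hL', hL₂']
    simp only [hpow]
  rw [this]
  exact hL₂.const_mul _
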